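/- Let m ∈ ℕ with m ≥ 1 and let A ⊆ ℕ^m. Then the following are equivalent: (1) there exist functions α₁,…,α_m : 𝒫_f(ℕ^ℕ) → ℕ and H₁,…,H_m : 𝒫_f(ℕ^ℕ) → 𝒫_f(ℕ) such that (a) whenever F, G ∈ 𝒫_f(ℕ^ℕ) and F ⊊ G one has max H_j(F) < min H_j(G) for every j ∈ {1,…,m}, and (b) whenever G₁ ⊊ G₂ ⊊ ⋯ ⊊ G_n ⊊ ⋯ is an infinite strictly increasing chain in 𝒫_f(ℕ^ℕ), f_i ∈ G_i for each i ∈ ℕ, and β₁ < β₂ < ⋯ < β_m are in 𝒫_f(ℕ), the tuple (Σ_{i∈β₁}(α₁(G_i)+Σ_{t∈H₁(G_i)}f_i(t)), …, Σ_{i∈β_m}(α_m(G_i)+Σ_{t∈H_m(G_i)}f_i(t))) belongs to A; (2) there exist idempotent ultrafilters p₁,…,p_m ∈ 𝒥 such that A ∈ ⊗_{i=1}^m p_i. -/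

import Mathlib

namespace MultiCST

/-- The sum `p + q` of ultrafilters on ℕ: `A ∈ p + q` iff `{x : {y : x+y ∈ A} ∈ q} ∈ p`. -/
def uAdd (p q : Ultrafilter ℕ) : Ultrafilter ℕ :=
  p.bind fun x => q.map fun y => x + y

/-- `A ⊆ ℕ` is a J-set. -/
def IsJSet (A : Set ℕ) : Prop :=
  ∀ F : Finset (ℕ → ℕ), F.Nonempty →
    ∃ (a : ℕ) (β : Finset ℕ), β.Nonempty ∧ ∀ f ∈ F, a + ∑ t ∈ β, f t ∈ A

/-- `p ∈ 𝒥`: every member of `p` is a J-set. -/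
def MemJ (p : Ultrafilter ℕ) : Prop := ∀ A : Set ℕ, A ∈ p → IsJSet A

/-- `p` is an idempotent ultrafilter. -/
def IdempotentUF (p : Ultrafilter ℕ) : Prop := uAdd p p = p

/-- `p` is a minimal idempotent ultrafilter. -/
def IsMinimalIdempotent (p : Ultrafilter ℕ) : Prop :=
  IdempotentUF p ∧
    ∀ q : Ultrafilter ℕ, IdempotentUF q → uAdd q p = q → uAdd p q = q → q = p

/-- Tensor product `⊗_{i=1}^m p_i` of ultrafilters on ℕ, as an ultrafilter on `Fin m → ℕ`. -/
def tensor : ∀ m : ℕ, (Fin m → Ultrafilter ℕ) → Ultrafilter (Fin m → ℕ)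
  | 0, _ => pure fun i => i.elim0
  | m + 1, p =>
      (p 0).bind fun x => (tensor m fun i => p i.succ).map fun v => Fin.cons x v

/-- `f : ℕ → ℕ` is (given by) a polynomial with coefficients in ℕ and zero constant term. -/
def IsPolyZeroConst (f : ℕ → ℕ) : Prop :=
  ∃ P : Polynomial ℕ, P.coeff 0 = 0 ∧ ∀ x, f x = P.eval x

/-- The linear combination `a₁·p₁ + a₂·p₂ + ⋯ + a_m·p_m` of ultrafilters on ℕ. -/
def linComb : ∀ m : ℕ, (Fin m → ℕ) → (Fin m → Ultrafilter ℕ) → Ultrafilter ℕ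
  | 0, _, _ => pure 0
  | m + 1, a, p =>
      uAdd ((p 0).map fun x => a 0 * x)
        (linComb m (fun i => a i.succ) fun i => p i.succ)


lemma IsJSet.mono {A B : Set ℕ} (h : IsJSet A) (hAB : A ⊆ B) : IsJSet B := by
  intro F hF
  obtain ⟨a, β, hβ, h'⟩ := h F hF
  exact ⟨a, β, hβ, fun f hf => hAB (h' f hf)⟩

lemma not_isJSet_empty : ¬ IsJSet ∅ := by
  intro h
  obtain ⟨a, β, _, h'⟩ := h {fun _ => 0} (Finset.singleton_nonempty _)
  exact h' _ (Finset.mem_singleton_self _)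

/-- J-sets can be found beyond any bound. -/
lemma IsJSet.far {A : Set ℕ} (h : IsJSet A) (N : ℕ) (F : Finset (ℕ → ℕ)) (hF : F.Nonempty) :
    ∃ (a : ℕ) (β : Finset ℕ), β.Nonempty ∧ (∀ y ∈ β, N ≤ y) ∧
      ∀ f ∈ F, a + ∑ t ∈ β, f t ∈ A := by
  classical
  obtain ⟨a, β, hβ, h'⟩ := h (F.image fun f t => f (t + N)) (hF.image _)
  refine ⟨a, β.map (addRightEmbedding N), by simpa using hβ, ?_, ?_⟩
  · intro y hy
    simp only [Finset.mem_map, addRightEmbedding_apply] at hy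
    obtain ⟨x, _, rfl⟩ := hy
    omega
  · intro f hf
    have := h' _ (Finset.mem_image_of_mem _ hf)
    simpa using this

/-- Partition regularity of J-sets. -/
lemma IsJSet.union {A B : Set ℕ} (h : IsJSet (A ∪ B)) : IsJSet A ∨ IsJSet B := by
  classical
  by_contra hcon
  push Not at hcon
  obtain ⟨hA, hB⟩ := hcon
  unfold IsJSet at hA hB
  push Not at hA hB
  obtain ⟨F₁, hF₁, hA⟩ := hA
  obtain ⟨F₂, hF₂, hB⟩ := hB
  let F := F₁ ∪ F₂
  obtain ⟨ι, _, hι⟩ := Combinatorics.Line.exists_mono_in_high_dimension F Prop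
  let n := Fintype.card ι
  let e : ι ≃ Fin n := Fintype.equivFin ι
  let g : (ι → F) → ℕ → ℕ := fun w y => ∑ i, (w i : ℕ → ℕ) (e i + n * y)
  have hFne : F.Nonempty := hF₁.mono Finset.subset_union_left
  obtain ⟨f0, hf0⟩ := hFne
  obtain ⟨a, β, hβ, hw⟩ := h ((Finset.univ : Finset (ι → F)).image g)
    ⟨g (fun _ => ⟨f0, hf0⟩), Finset.mem_image_of_mem _ (Finset.mem_univ _)⟩
  obtain ⟨l, c, hc⟩ := hι (fun w => a + ∑ y ∈ β, g w y ∈ A)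
  -- constant and variable positions
  let V : Finset ι := Finset.univ.filter fun i => l.idxFun i = none
  let C : Finset ι := Finset.univ.filter fun i => ¬ l.idxFun i = none
  let d : ℕ := a + ∑ y ∈ β, ∑ i ∈ C, (l ⟨f0, hf0⟩ i : ℕ → ℕ) (e i + n * y)
  let γ : Finset ℕ := (β ×ˢ V).image fun z => (e z.2 : ℕ) + n * z.1
  have hV : V.Nonempty := by
    obtain ⟨i, hi⟩ := l.proper
    exact ⟨i, by simp [V, hi]⟩
  have hγ : γ.Nonempty := (hβ.product hV).image _
  have key : ∀ f (hf : f ∈ F), a + ∑ y ∈ β, g (l ⟨f, hf⟩) y = d + ∑ t ∈ γ, f t := by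
    intro f hf
    have h1 : ∑ t ∈ γ, f t = ∑ y ∈ β, ∑ i ∈ V, f (e i + n * y) := by
      rw [Finset.sum_image, Finset.sum_product]
      rintro ⟨y, i⟩ _ ⟨y', i'⟩ _ hh
      simp only at hh
      have hi := (e i).2
      have hi' := (e i').2
      have hn : 0 < n := by omega
      have e1 : (e i : ℕ) = e i' := by
        have := congrArg (· % n) hh
        simpa [Nat.add_mul_mod_self_left, Nat.mod_eq_of_lt hi, Nat.mod_eq_of_lt hi'] using this
      have e2 : y = y' := by
        rw [e1] at hh
        exact Nat.eq_of_mul_eq_mul_left hn (by omega)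
      have e3 : i = i' := e.injective (Fin.ext e1)
      rw [e2, e3]
    rw [h1]
    simp only [d, g]
    rw [add_assoc, ← Finset.sum_add_distrib]
    congr 1
    refine Finset.sum_congr rfl fun y _ => ?_
    rw [← Finset.sum_filter_add_sum_filter_not Finset.univ (fun i => l.idxFun i = none), add_comm]
    congr 1
    · refine Finset.sum_congr rfl fun i hi => ?_
      have hi : ¬ l.idxFun i = none := (Finset.mem_filter.1 hi).2
      obtain ⟨z, hz⟩ := Option.ne_none_iff_exists'.1 hi
      rw [Combinatorics.Line.apply_some hz, Combinatorics.Line.apply_some hz]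
    · refine Finset.sum_congr rfl fun i hi => ?_
      have hi : l.idxFun i = none := (Finset.mem_filter.1 hi).2
      rw [Combinatorics.Line.apply_none _ _ _ hi]
  by_cases hcA : c
  · obtain ⟨f, hf, hfA⟩ := hA d γ hγ
    have hfF : f ∈ F := Finset.mem_union_left _ hf
    have := hc ⟨f, hfF⟩
    simp only [key f hfF] at this
    exact hfA (this ▸ hcA)
  · obtain ⟨f, hf, hfB⟩ := hB d γ hγ
    have hfF : f ∈ F := Finset.mem_union_right _ hf
    have h1 := hc ⟨f, hfF⟩
    have h2 := hw _ (Finset.mem_image_of_mem _ (Finset.mem_univ (l ⟨f, hfF⟩)))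
    simp only [key f hfF] at h1 h2
    rcases h2 with h2 | h2
    · exact hcA (h1 ▸ h2)
    · exact hfB h2

lemma mem_uAdd {p q : Ultrafilter ℕ} {A : Set ℕ} :
    A ∈ uAdd p q ↔ ∀ᶠ x in p, ∀ᶠ y in q, x + y ∈ A := Iff.rfl

lemma MemJ.uAdd {p : Ultrafilter ℕ} (hp : MemJ p) (q : Ultrafilter ℕ) : MemJ (uAdd p q) := by
  intro A hA F hF
  rw [mem_uAdd] at hA
  obtain ⟨a, β, hβ, h⟩ := hp _ hA F hF
  have h2 : ∀ᶠ y in (q : Filter ℕ), ∀ f ∈ F, (a + ∑ t ∈ β, f t) + y ∈ A :=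
    (Filter.eventually_all_finset F).2 h
  obtain ⟨y, hy⟩ := h2.exists
  refine ⟨a + y, β, hβ, fun f hf => ?_⟩
  have := hy f hf
  rwa [add_right_comm] at this

/-- An idempotent in a closed subsemigroup given by a family of sets and J. -/
lemma exists_idem {I : Type*} [Nonempty I] (T : I → Set ℕ)
    (hdir : ∀ i j, ∃ k, T k ⊆ T i ∩ T j)
    (hJ : ∀ i, IsJSet (T i))
    (hs : ∀ i, ∀ x ∈ T i, ∃ j, ∀ y ∈ T j, x + y ∈ T i) :
    ∃ p : Ultrafilter ℕ, IdempotentUF p ∧ MemJ p ∧ ∀ i, T i ∈ p := by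
  let L : Filter ℕ :=
    { sets := {A | ∃ i, ¬ IsJSet (T i \ A)}
      univ_sets := by
        obtain ⟨i⟩ := ‹Nonempty I›
        exact ⟨i, by simpa using not_isJSet_empty⟩
      sets_of_superset := by
        rintro A B ⟨i, hi⟩ hAB
        exact ⟨i, fun h => hi (h.mono (Set.sdiff_subset_sdiff_right hAB))⟩
      inter_sets := by
        rintro A B ⟨i, hi⟩ ⟨j, hj⟩
        obtain ⟨k, hk⟩ := hdir i j
        refine ⟨k, fun h => ?_⟩
        have h2 : IsJSet ((T i \ A) ∪ (T j \ B)) := by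
          refine h.mono ?_
          rintro x ⟨hx, hx'⟩
          by_cases hxA : x ∈ A
          · exact Or.inr ⟨(hk hx).2, fun hB => hx' ⟨hxA, hB⟩⟩
          · exact Or.inl ⟨(hk hx).1, hxA⟩
        rcases h2.union with h3 | h3
        · exact hi h3
        · exact hj h3 }
  have hL : L.NeBot := by
    rw [Filter.neBot_iff, ne_eq, ← Filter.empty_mem_iff_bot]
    rintro ⟨i, hi⟩
    exact hi (by simpa using hJ i)
  let p₀ := Ultrafilter.of L
  have hp₀ : (p₀ : Filter ℕ) ≤ L := Ultrafilter.of_le L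
  have h1 : ∀ i, T i ∈ p₀ := fun i => hp₀ ⟨i, by simpa using not_isJSet_empty⟩
  have h2 : MemJ p₀ := by
    intro A hA
    by_contra hn
    obtain ⟨i⟩ := ‹Nonempty I›
    have : Aᶜ ∈ p₀ := hp₀ ⟨i, fun h => hn (h.mono (by intro x hx; simpa using hx.2))⟩
    exact (Ultrafilter.compl_mem_iff_notMem.1 this) hA
  let S : Set (Ultrafilter ℕ) := {p | MemJ p ∧ ∀ i, T i ∈ p}
  have hSc : IsClosed S := by
    have : S = (⋂ (A : Set ℕ) (_ : ¬ IsJSet A), {p : Ultrafilter ℕ | Aᶜ ∈ p}) ∩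
        ⋂ i, {p : Ultrafilter ℕ | T i ∈ p} := by
      ext p
      simp only [S, MemJ, Set.mem_ofPred_eq, Set.mem_inter_iff, Set.mem_iInter,
        Ultrafilter.compl_mem_iff_notMem]
      refine and_congr_left fun _ => forall_congr' fun A => ?_
      tauto
    rw [this]
    exact (isClosed_iInter fun A => isClosed_iInter fun _ => ultrafilter_isClosed_basic _).inter
      (isClosed_iInter fun _ => ultrafilter_isClosed_basic _)
  let _ : AddSemigroup (Ultrafilter ℕ) := Ultrafilter.addSemigroup
  obtain ⟨p, hp, hpp⟩ := exists_idempotent_in_compact_add_subsemigroup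
    (M := Ultrafilter ℕ) Ultrafilter.continuous_add_left S ⟨p₀, h2, h1⟩ hSc.isCompact (by
      rintro p ⟨hp, hpT⟩ q ⟨hq, hqT⟩
      refine ⟨hp.uAdd q, fun i => ?_⟩
      change T i ∈ uAdd p q
      rw [mem_uAdd]
      filter_upwards [hpT i] with x hx
      obtain ⟨j, hj⟩ := hs i x hx
      filter_upwards [hqT j] with y hy using hj y hy)
  exact ⟨p, hpp, hp.1, hp.2⟩


/-- Sums along chains strictly above `F`. -/
def Tset (a : Finset (ℕ → ℕ) → ℕ) (h : Finset (ℕ → ℕ) → Finset ℕ) (F : Finset (ℕ → ℕ)) : Set ℕ :=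
  {x | ∃ G : ℕ → Finset (ℕ → ℕ), (∀ i, F ⊂ G i) ∧ (∀ i j, i < j → G i ⊂ G j) ∧
    ∃ f : ℕ → ℕ → ℕ, (∀ i, f i ∈ G i) ∧ ∃ β : Finset ℕ, β.Nonempty ∧
      x = ∑ i ∈ β, (a (G i) + ∑ t ∈ h (G i), f i t)}

lemma exists_chain (F : Finset (ℕ → ℕ)) :
    ∃ G : ℕ → Finset (ℕ → ℕ), (∀ i, F ⊂ G i) ∧ (∀ i j, i < j → G i ⊂ G j) := by
  classical
  have hinf : (F : Set (ℕ → ℕ))ᶜ.Infinite := F.finite_toSet.infinite_compl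
  let e := hinf.natEmbedding
  have he : ∀ i, (e i : ℕ → ℕ) ∉ F := fun i => (e i).2
  have hinj : ∀ i j, (e i : ℕ → ℕ) = e j → i = j := fun i j h => e.injective (Subtype.ext h)
  refine ⟨fun i => F ∪ (Finset.range (i + 1)).image (fun k => (e k : ℕ → ℕ)), fun i => ?_,
    fun i j hij => ?_⟩
  · refine Finset.ssubset_iff_subset_ne.2 ⟨Finset.subset_union_left, fun h => he 0 ?_⟩
    refine h.symm.subset ?_
    exact Finset.mem_union_right _ (Finset.mem_image_of_mem (fun k => (e k : ℕ → ℕ)) (by simp))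
  · refine Finset.ssubset_iff_subset_ne.2 ⟨Finset.union_subset_union_right
      (Finset.image_subset_image (Finset.range_mono (by omega))), fun h => ?_⟩
    have hj : (e j : ℕ → ℕ) ∈ F ∪ (Finset.range (j + 1)).image (fun k => (e k : ℕ → ℕ)) :=
      Finset.mem_union_right _ (Finset.mem_image_of_mem (fun k => (e k : ℕ → ℕ)) (by simp))
    rcases Finset.mem_union.1 (h.symm.subset hj) with hj | hj
    · exact he j hj
    · obtain ⟨k, hk, hk'⟩ := Finset.mem_image.1 hj
      have := hinj _ _ hk'
      simp at hk
      omega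

/-- Concatenation of two sequences. -/
def cat {X : Type*} (N : ℕ) (G G' : ℕ → X) (i : ℕ) : X := if i ≤ N then G i else G' (i - (N + 1))

lemma cat_le {X : Type*} {N : ℕ} {G G' : ℕ → X} {i : ℕ} (h : i ≤ N) : cat N G G' i = G i :=
  if_pos h

lemma cat_add {X : Type*} {N : ℕ} {G G' : ℕ → X} {i : ℕ} : cat N G G' (i + (N + 1)) = G' i := by
  rw [cat, if_neg (by omega), Nat.add_sub_cancel]

lemma cat_cases {N : ℕ} (P : ℕ → Prop) (h1 : ∀ i ≤ N, P i) (h2 : ∀ i, P (i + (N + 1))) (i : ℕ) :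
    P i := by
  by_cases h : i ≤ N
  · exact h1 i h
  · have := h2 (i - (N + 1))
    rwa [Nat.sub_add_cancel (by omega)] at this

lemma cat_chain {N : ℕ} {G G' : ℕ → Finset (ℕ → ℕ)} (hG : ∀ i j, i < j → G i ⊂ G j)
    (hG' : ∀ i j, i < j → G' i ⊂ G' j) (h : ∀ i, G N ⊂ G' i) :
    ∀ i j, i < j → cat N G G' i ⊂ cat N G G' j := by
  refine cat_cases (N := N) _ (fun i hi => ?_) (fun i => ?_)
  · refine cat_cases (N := N) _ (fun j hj => ?_) (fun j => ?_)
    · intro hij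
      rw [cat_le hi, cat_le hj]
      exact hG i j hij
    · intro hij
      rw [cat_le hi, cat_add]
      rcases hi.lt_or_eq with h' | rfl
      · exact (hG i N h').trans (h j)
      · exact h j
  · refine cat_cases (N := N) _ (fun j hj => ?_) (fun j => ?_)
    · intro hij
      omega
    · intro hij
      rw [cat_add, cat_add]
      exact hG' i j (by omega)

lemma sum_cat_left (a : Finset (ℕ → ℕ) → ℕ) (h : Finset (ℕ → ℕ) → Finset ℕ) {N : ℕ}
    {G G' : ℕ → Finset (ℕ → ℕ)} {f f' : ℕ → ℕ → ℕ} {β : Finset ℕ} (hβ : ∀ i ∈ β, i ≤ N) :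
    ∑ i ∈ β, (a (cat N G G' i) + ∑ t ∈ h (cat N G G' i), cat N f f' i t) =
      ∑ i ∈ β, (a (G i) + ∑ t ∈ h (G i), f i t) := by
  refine Finset.sum_congr rfl fun i hi => ?_
  rw [cat_le (hβ i hi), cat_le (hβ i hi)]

lemma sum_cat_right (a : Finset (ℕ → ℕ) → ℕ) (h : Finset (ℕ → ℕ) → Finset ℕ) {N : ℕ}
    {G G' : ℕ → Finset (ℕ → ℕ)} {f f' : ℕ → ℕ → ℕ} {β : Finset ℕ} :
    ∑ i ∈ β.map (addRightEmbedding (N + 1)),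
        (a (cat N G G' i) + ∑ t ∈ h (cat N G G' i), cat N f f' i t) =
      ∑ i ∈ β, (a (G' i) + ∑ t ∈ h (G' i), f' i t) := by
  rw [Finset.sum_map]
  refine Finset.sum_congr rfl fun i hi => ?_
  simp only [addRightEmbedding_apply, cat_add]

lemma Tset_anti (a : Finset (ℕ → ℕ) → ℕ) (h : Finset (ℕ → ℕ) → Finset ℕ) {F F' : Finset (ℕ → ℕ)}
    (hF : F ⊆ F') : Tset a h F' ⊆ Tset a h F := by
  rintro x ⟨G, hG, r⟩
  exact ⟨G, fun i => hF.trans_ssubset (hG i), r⟩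

lemma exists_p (a : Finset (ℕ → ℕ) → ℕ) (h : Finset (ℕ → ℕ) → Finset ℕ)
    (hne : ∀ F, F.Nonempty → (h F).Nonempty) :
    ∃ p : Ultrafilter ℕ, IdempotentUF p ∧ MemJ p ∧ ∀ F, Tset a h F ∈ p := by
  classical
  refine exists_idem (Tset a h) ?_ ?_ ?_
  · intro F F'
    exact ⟨F ∪ F', Set.subset_inter (Tset_anti a h Finset.subset_union_left)
      (Tset_anti a h Finset.subset_union_right)⟩
  · intro F L hL
    obtain ⟨G, hG, hG'⟩ := exists_chain (F ∪ L)
    have hF : ∀ i, F ⊂ G i := fun i => Finset.subset_union_left.trans_ssubset (hG i)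
    have hLG : ∀ i, L ⊂ G i := fun i => Finset.subset_union_right.trans_ssubset (hG i)
    refine ⟨a (G 0), h (G 0), hne _ (hL.mono (hLG 0).1), fun f hf => ?_⟩
    exact ⟨G, hF, hG', fun _ => f, fun i => (hLG i).1 hf, {0}, by simp, by simp⟩
  · rintro F x ⟨G, hG, hG2, f, hf, β, hβ, rfl⟩
    let N := β.max' hβ
    have hN : ∀ i ∈ β, i ≤ N := fun i hi => Finset.le_max' _ _ hi
    refine ⟨G N, ?_⟩
    rintro y ⟨G', hG', hG2', f', hf', β', hβ', rfl⟩
    refine ⟨cat N G G', ?_, cat_chain hG2 hG2' hG', cat N f f', ?_,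
      β ∪ β'.map (addRightEmbedding (N + 1)), hβ.mono Finset.subset_union_left, ?_⟩
    · refine cat_cases (N := N) _ (fun i hi => ?_) (fun i => ?_)
      · rw [cat_le hi]; exact hG i
      · rw [cat_add]; exact (hG N).trans (hG' i)
    · refine cat_cases (N := N) _ (fun i hi => ?_) (fun i => ?_)
      · rw [cat_le hi, cat_le hi]; exact hf i
      · rw [cat_add, cat_add]; exact hf' i
    · rw [Finset.sum_union, sum_cat_left _ _ hN, sum_cat_right]
      rw [Finset.disjoint_left]
      intro i hi hi'
      obtain ⟨k, _, rfl⟩ := Finset.mem_map.1 hi'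
      have := hN _ hi
      simp only [addRightEmbedding_apply] at this
      omega

lemma mem_tensor_of (m : ℕ) : ∀ (α : Fin m → Finset (ℕ → ℕ) → ℕ)
    (H : Fin m → Finset (ℕ → ℕ) → Finset ℕ) (p : Fin m → Ultrafilter ℕ)
    (_ : ∀ j F, Tset (α j) (H j) F ∈ p j) (A : Set (Fin m → ℕ)) (F : Finset (ℕ → ℕ))
    (_ : ∀ G : ℕ → Finset (ℕ → ℕ),
        (∀ i, F ⊂ G i) → (∀ i j, i < j → G i ⊂ G j) →
        ∀ f : ℕ → ℕ → ℕ, (∀ i, f i ∈ G i) →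
        ∀ β : Fin m → Finset ℕ,
          (∀ l, (β l).Nonempty) →
          (∀ l l' : Fin m, l < l' → ∀ x ∈ β l, ∀ y ∈ β l', x < y) →
          (fun l => ∑ i ∈ β l, (α l (G i) + ∑ t ∈ H l (G i), f i t)) ∈ A),
    A ∈ tensor m p := by
  induction m with
  | zero =>
    intro α H p hp A F hA
    obtain ⟨G, hG, hG2⟩ := exists_chain F
    have hn : ∀ i, ∃ f, f ∈ G i := fun i => ⟨_, (Finset.exists_of_ssubset (hG i)).choose_spec.1⟩
    choose f hf using hn
    have := hA G hG hG2 f hf (fun _ => ∅) (fun l => l.elim0) (fun l => l.elim0)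
    change (fun i : Fin 0 => i.elim0) ∈ A
    convert this using 1
  | succ m ih =>
    intro α H p hp A F hA
    change ∀ᶠ x in (p 0 : Filter ℕ), {v | Fin.cons x v ∈ A} ∈ tensor m fun i => p i.succ
    filter_upwards [hp 0 F]
    rintro x ⟨G, hG, hG2, f, hf, β, hβ, rfl⟩
    let N := β.max' hβ
    have hN : ∀ i ∈ β, i ≤ N := fun i hi => Finset.le_max' _ _ hi
    refine ih (fun j => α j.succ) (fun j => H j.succ) _ (fun j => hp j.succ) _ (G N) ?_
    intro G' hG' hG2' f' hf' β' hβ' hβ2'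
    have := hA (cat N G G') ?_ (cat_chain hG2 hG2' hG') (cat N f f') ?_
      (Fin.cons β fun j => (β' j).map (addRightEmbedding (N + 1))) ?_ ?_
    · change Fin.cons _ _ ∈ A
      convert this using 1
      funext l
      refine Fin.cases ?_ (fun l => ?_) l
      · simp only [Fin.cons_zero]
        rw [sum_cat_left _ _ hN]
      · simp only [Fin.cons_succ]
        rw [sum_cat_right]
    · refine cat_cases (N := N) _ (fun i hi => ?_) (fun i => ?_)
      · rw [cat_le hi]; exact hG i
      · rw [cat_add]; exact (hG N).trans (hG' i)
    · refine cat_cases (N := N) _ (fun i hi => ?_) (fun i => ?_)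
      · rw [cat_le hi, cat_le hi]; exact hf i
      · rw [cat_add, cat_add]; exact hf' i
    · refine Fin.cases ?_ (fun l => ?_)
      · simpa using hβ
      · simpa using hβ' l
    · refine Fin.cases ?_ (fun l => ?_)
      · refine Fin.cases ?_ (fun l' => ?_)
        · intro h; exact absurd h (lt_irrefl _)
        · intro _ x hx y hy
          simp only [Fin.cons_zero] at hx
          simp only [Fin.cons_succ, Finset.mem_map, addRightEmbedding_apply] at hy
          obtain ⟨k, _, rfl⟩ := hy
          have := hN x hx
          omega
      · refine Fin.cases ?_ (fun l' => ?_)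
        · intro h; exact absurd h (by simp)
        · intro h x hx y hy
          simp only [Fin.cons_succ, Finset.mem_map, addRightEmbedding_apply] at hx hy
          obtain ⟨k, hk, rfl⟩ := hy
          obtain ⟨k', hk', rfl⟩ := hx
          have := hβ2' l l' (by simpa using h) k' hk' k hk
          omega


/-- Iterated quantifier. -/
def W (P : ℕ → Ultrafilter ℕ) (A : Set (ℕ → ℕ)) : ℕ → ℕ → (ℕ → ℕ) → Prop
  | 0, _, v => v ∈ A
  | k + 1, l, v => ∀ᶠ x in P l, W P A k (l + 1) (Function.update v l x)

lemma W_of_tensor (P : ℕ → Ultrafilter ℕ) (A' : Set (ℕ → ℕ)) (m : ℕ) :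
    ∀ (p : Fin m → Ultrafilter ℕ) (A : Set (Fin m → ℕ)) (_ : A ∈ tensor m p) (l : ℕ) (v : ℕ → ℕ)
    (_ : ∀ i : Fin m, P (l + i) = p i)
    (_ : ∀ u : ℕ → ℕ, (∀ i < l, u i = v i) → (fun i : Fin m => u (l + i)) ∈ A → u ∈ A'),
    W P A' m l v := by
  induction m with
  | zero =>
    intro p A hA l v hP hu
    refine hu v (fun _ _ => rfl) ?_
    change (fun i : Fin 0 => i.elim0) ∈ A at hA
    convert hA using 1
  | succ m ih =>
    intro p A hA l v hP hu
    change ∀ᶠ x in (p 0 : Filter ℕ), {v | Fin.cons x v ∈ A} ∈ tensor m fun i => p i.succ at hA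
    change ∀ᶠ x in (P l : Filter ℕ), W P A' m (l + 1) (Function.update v l x)
    have h0 : P l = p 0 := hP 0
    rw [h0]
    filter_upwards [hA] with x hx
    refine ih _ _ hx _ _ (fun i => ?_) (fun u hu1 hu2 => ?_)
    · have := hP i.succ
      rw [← this]
      congr 1
      simp only [Fin.val_succ]
      omega
    · refine hu u (fun i hi => ?_) ?_
      · rw [hu1 i (by omega), Function.update_of_ne (by omega)]
      · change Fin.cons _ _ ∈ A at hu2
        convert hu2 using 1
        funext i
        refine Fin.cases ?_ (fun i => ?_) i
        · have := hu1 l (by omega)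
          simpa using this
        · simp only [Fin.cons_succ, Fin.val_succ]
          congr 1
          omega

lemma IdempotentUF.ev {p : Ultrafilter ℕ} (hp : IdempotentUF p) {Q : ℕ → Prop}
    (h : ∀ᶠ x in (p : Filter ℕ), Q x) :
    ∀ᶠ x in (p : Filter ℕ), ∀ᶠ y in (p : Filter ℕ), Q (x + y) := by
  have hsum : {x | Q x} ∈ uAdd p p := by rw [hp]; exact h
  exact hsum

/-- Good states. -/
def Good (P : ℕ → Ultrafilter ℕ) (A : Set (ℕ → ℕ)) (m : ℕ) (s : (ℕ → ℕ) × ℕ) : Prop :=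
  (∀ i, s.2 ≤ i → s.1 i = 0) ∧ W P A (m - s.2) s.2 s.1 ∧
    ∀ k, s.2 = k + 1 → ∀ᶠ x in P k, W P A (m - s.2) s.2 (Function.update s.1 k (s.1 k + x))

/-- The step from one state to the next. -/
def stp (s : (ℕ → ℕ) × ℕ) (j x : ℕ) : (ℕ → ℕ) × ℕ :=
  (Function.update s.1 j (s.1 j + x), j + 1)

/-- Allowed steps. -/
def Alw (s : (ℕ → ℕ) × ℕ) (j : ℕ) : Prop := s.2 = j ∨ s.2 = j + 1

lemma Good.step {P : ℕ → Ultrafilter ℕ} {A : Set (ℕ → ℕ)} {m : ℕ} {s : (ℕ → ℕ) × ℕ}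
    (hs : Good P A m s) {j : ℕ} (hj : j < m) (hP : IdempotentUF (P j)) (ha : Alw s j) :
    ∀ᶠ x in (P j : Filter ℕ), Good P A m (stp s j x) := by
  obtain ⟨v, l⟩ := s
  obtain ⟨h0, h1, h2⟩ := hs
  simp only at h0 h1 h2
  have key : ∀ᶠ x in (P j : Filter ℕ), W P A (m - (j + 1)) (j + 1)
      (Function.update v j (v j + x)) := by
    rcases ha with ha | ha
    · simp only at ha
      subst ha
      rw [h0 l le_rfl]
      obtain ⟨k, hk⟩ : ∃ k, m = l + (k + 1) := ⟨m - l - 1, by omega⟩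
      have e1 : m - l = k + 1 := by omega
      have e2 : m - (l + 1) = k := by omega
      rw [e1] at h1
      rw [e2]
      simpa only [zero_add] using (show ∀ᶠ x in (P l : Filter ℕ), W P A k (l + 1)
        (Function.update v l x) from h1)
    · simp only at ha
      subst ha
      exact h2 j rfl
  filter_upwards [key, hP.ev key] with x hx hxy
  refine ⟨fun i hi => ?_, hx, fun k hk => ?_⟩
  · simp only [stp] at hi ⊢
    rw [Function.update_of_ne (by omega)]
    refine h0 i ?_
    rcases ha with ha | ha <;> simp only at ha <;> omega
  · simp only [stp, Nat.add_right_cancel_iff] at hk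
    subst hk
    filter_upwards [hxy] with y hy
    simpa [stp, add_assoc] using hy

/-- Data attached to a finite set of functions. -/
abbrev Dat (m : ℕ) : Type := (Fin m → ℕ × Finset ℕ) × Set ((ℕ → ℕ) × ℕ)

/-- The set of reachable states below `F`. -/
def nextR (m : ℕ) (F : Finset (ℕ → ℕ)) (c : ∀ G, G ⊂ F → Dat m) : Set ((ℕ → ℕ) × ℕ) :=
  {s | s = (0, 0) ∨ ∃ G, ∃ h : G ⊂ F, G.Nonempty ∧ ∃ s' ∈ (c G h).2, ∃ (j : Fin m) (f : ℕ → ℕ),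
    f ∈ G ∧ Alw s' j ∧ s = stp s' j (((c G h).1 j).1 + ∑ t ∈ ((c G h).1 j).2, f t)}

/-- The requirement on the choice at `F`. -/
def Req (m : ℕ) (P : ℕ → Ultrafilter ℕ) (A : Set (ℕ → ℕ)) (F : Finset (ℕ → ℕ))
    (c : ∀ G, G ⊂ F → Dat m) (j : Fin m) (d : ℕ × Finset ℕ) : Prop :=
  d.2.Nonempty ∧ (∀ G (h : G ⊂ F), ∀ x ∈ ((c G h).1 j).2, ∀ y ∈ d.2, x < y) ∧
    ∀ f ∈ F, ∀ s ∈ nextR m F c, Alw s j → Good P A m (stp s j (d.1 + ∑ t ∈ d.2, f t))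

open Classical in
/-- One step of the recursion. -/
noncomputable def recStep (m : ℕ) (P : ℕ → Ultrafilter ℕ) (A : Set (ℕ → ℕ)) (F : Finset (ℕ → ℕ))
    (c : ∀ G, G ⊂ F → Dat m) : Dat m :=
  (fun j => if h : ∃ d, Req m P A F c j d then h.choose else (0, ∅), nextR m F c)

/-- The recursive construction. -/
noncomputable def con (m : ℕ) (P : ℕ → Ultrafilter ℕ) (A : Set (ℕ → ℕ)) :
    Finset (ℕ → ℕ) → Dat m :=
  (wellFounded_lt (α := Finset (ℕ → ℕ))).fix fun F c => recStep m P A F fun G h => c G h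

lemma con_eq (m : ℕ) (P : ℕ → Ultrafilter ℕ) (A : Set (ℕ → ℕ)) (F : Finset (ℕ → ℕ)) :
    con m P A F = recStep m P A F fun G _ => con m P A G :=
  (wellFounded_lt (α := Finset (ℕ → ℕ))).fix_eq _ F

lemma con_snd (m : ℕ) (P : ℕ → Ultrafilter ℕ) (A : Set (ℕ → ℕ)) (F : Finset (ℕ → ℕ)) :
    (con m P A F).2 = nextR m F fun G _ => con m P A G := by
  rw [con_eq]; rfl

lemma con_spec1 {m : ℕ} {P : ℕ → Ultrafilter ℕ} {A : Set (ℕ → ℕ)}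
    (hI : ∀ j < m, IdempotentUF (P j)) (hJ : ∀ j < m, MemJ (P j)) (F : Finset (ℕ → ℕ))
    (hF : F.Nonempty) (hfin : (con m P A F).2.Finite) (hg : ∀ s ∈ (con m P A F).2, Good P A m s)
    (j : Fin m) :
    Req m P A F (fun G _ => con m P A G) j ((con m P A F).1 j) := by
  classical
  have hex : ∃ d, Req m P A F (fun G _ => con m P A G) j d := by
    have hev : ∀ᶠ x in (P j : Filter ℕ), ∀ s ∈ (con m P A F).2, Alw s j →
        Good P A m (stp s j x) := by
      rw [Filter.eventually_all_finite hfin]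
      intro s hs
      by_cases ha : Alw s j
      · filter_upwards [(hg s hs).step j.2 (hI j j.2) ha] with x hx _ using hx
      · exact Filter.Eventually.of_forall fun x h => absurd h ha
    let U : Finset ℕ := F.powerset.biUnion fun G => ((con m P A G).1 j).2
    obtain ⟨a, β, hβ, hfar, hgood⟩ := (hJ j j.2 _ hev).far (U.sup id + 1) F hF
    refine ⟨(a, β), hβ, ?_, ?_⟩
    · intro G h x hx y hy
      have h1 : x ∈ U := Finset.mem_biUnion.2 ⟨G, Finset.mem_powerset.2 h.1, hx⟩
      have h2 : x ≤ U.sup id := Finset.le_sup (f := id) h1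
      have h3 := hfar y hy
      omega
    · intro f hf s hs ha
      rw [← con_snd] at hs
      exact hgood f hf s hs ha
  have : (con m P A F).1 j = hex.choose := by
    rw [con_eq]
    exact dif_pos hex
  rw [this]
  exact hex.choose_spec

lemma con_spec2 {m : ℕ} {P : ℕ → Ultrafilter ℕ} {A : Set (ℕ → ℕ)}
    (hI : ∀ j < m, IdempotentUF (P j)) (hJ : ∀ j < m, MemJ (P j)) (h0 : Good P A m (0, 0))
    (F : Finset (ℕ → ℕ)) :
    (con m P A F).2.Finite ∧ ∀ s ∈ (con m P A F).2, Good P A m s := by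
  classical
  induction F using Finset.strongInduction with
  | H F ih =>
    constructor
    · let X : Set ((ℕ → ℕ) × ℕ) := {(0, 0)} ∪ ⋃ G ∈ F.ssubsets, ⋃ s' ∈ (con m P A G).2,
        ⋃ j : Fin m, ⋃ f ∈ G,
          {stp s' j (((con m P A G).1 j).1 + ∑ t ∈ ((con m P A G).1 j).2, f t)}
      have hX : X.Finite := by
        refine (Set.finite_singleton _).union ?_
        refine Set.Finite.biUnion F.ssubsets.finite_toSet fun G hG => ?_
        have hG' : G ⊂ F := by simpa using hG
        refine Set.Finite.biUnion (ih G hG').1 fun s' _ => ?_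
        refine Set.finite_iUnion fun j => ?_
        exact Set.Finite.biUnion G.finite_toSet fun f _ => Set.finite_singleton _
      refine hX.subset ?_
      rw [con_snd]
      rintro s (rfl | ⟨G, hG, hne, s', hs', j, f, hf, ha, rfl⟩)
      · exact Or.inl rfl
      · refine Or.inr ?_
        simp only [Set.mem_iUnion]
        exact ⟨G, by simpa using hG, s', hs', j, f, hf, rfl⟩
    · intro s hs
      rw [con_snd] at hs
      rcases hs with rfl | ⟨G, hG, hne, s', hs', j, f, hf, ha, rfl⟩
      · exact h0
      · obtain ⟨i1, i2⟩ := ih G hG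
        have := (con_spec1 hI hJ G hne i1 i2 j).2.2 f hf s' (by rwa [← con_snd]) ha
        exact this

lemma path {m : ℕ} (R : ℕ → Set ((ℕ → ℕ) × ℕ)) (y : Fin m → ℕ → ℕ)
    (h0 : ∀ n, (0, 0) ∈ R n) (hmono : ∀ n n', n ≤ n' → R n ⊆ R n')
    (hstep : ∀ n, ∀ s ∈ R n, ∀ j : Fin m, Alw s j → stp s j (y j n) ∈ R (n + 1))
    (β : Fin m → Finset ℕ) (hβ : ∀ l, (β l).Nonempty)
    (hβ2 : ∀ l l' : Fin m, l < l' → ∀ x ∈ β l, ∀ y ∈ β l', x < y) (l : ℕ) (hl : l ≤ m) :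
    ∃ v : ℕ → ℕ, (∀ i : Fin m, (i : ℕ) < l → v i = ∑ k ∈ β i, y i k) ∧ (∀ i, l ≤ i → v i = 0) ∧
      ∀ N, (∀ i : Fin m, (i : ℕ) < l → ∀ x ∈ β i, x < N) → (v, l) ∈ R N := by
  induction l with
  | zero => exact ⟨0, fun i hi => absurd hi (by omega), fun _ _ => rfl, fun N _ => h0 N⟩
  | succ l ih =>
    obtain ⟨v, hv1, hv2, hv3⟩ := ih (by omega)
    let j : Fin m := ⟨l, hl⟩
    have inner : ∀ b : Finset ℕ, b.Nonempty →
        (∀ i : Fin m, (i : ℕ) < l → ∀ x ∈ β i, ∀ z ∈ b, x < z) →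
        ∀ N, (∀ z ∈ b, z < N) → (Function.update v l (∑ k ∈ b, y j k), l + 1) ∈ R N := by
      intro b
      induction b using Finset.induction_on_max with
      | empty => intro h; exact absurd h (by simp)
      | insert a b hab ihb =>
        intro _ hlt N hN
        have haN : a + 1 ≤ N := hN a (Finset.mem_insert_self _ _)
        have hanot : a ∉ b := fun h => lt_irrefl _ (hab a h)
        refine hmono _ _ haN ?_
        rw [Finset.sum_insert hanot]
        rcases b.eq_empty_or_nonempty with rfl | hb
        · have h1 : (v, l) ∈ R a :=
            hv3 a fun i hi x hx => hlt i hi x hx a (Finset.mem_insert_self _ _)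
          have h2 := hstep a _ h1 j (Or.inl rfl)
          simpa [stp, j, hv2 l le_rfl] using h2
        · have h1 := ihb hb
            (fun i hi x hx z hz => hlt i hi x hx z (Finset.mem_insert_of_mem hz)) a hab
          have h2 := hstep a _ h1 j (Or.inr rfl)
          simpa [stp, j, add_comm] using h2
    refine ⟨Function.update v l (∑ k ∈ β j, y j k), fun i hi => ?_, fun i hi => ?_, fun N hN => ?_⟩
    · by_cases hil : (i : ℕ) = l
      · have : i = j := Fin.ext hil
        subst this
        simp [j]
      · rw [Function.update_of_ne hil]
        exact hv1 i (by omega)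
    · rw [Function.update_of_ne (by omega)]
      exact hv2 i (by omega)
    · exact inner (β j) (hβ j) (fun i hi x hx z hz => hβ2 i j hi x hx z hz) N
        (fun z hz => hN j (by simp [j]) z hz)


/-- Multidimensional Stronger Central Sets Theorem II (infinitary form). -/
theorem multidimensional_stronger_CST_II_infinitary (m : ℕ) (hm : 1 ≤ m)
    (A : Set (Fin m → ℕ)) :
    (∃ (α : Fin m → Finset (ℕ → ℕ) → ℕ) (H : Fin m → Finset (ℕ → ℕ) → Finset ℕ),
      (∀ (j : Fin m) (F : Finset (ℕ → ℕ)), F.Nonempty → (H j F).Nonempty) ∧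
      (∀ (j : Fin m) (F G : Finset (ℕ → ℕ)), F.Nonempty → F ⊂ G →
        ∀ x ∈ H j F, ∀ y ∈ H j G, x < y) ∧
      (∀ G : ℕ → Finset (ℕ → ℕ),
        (∀ i, (G i).Nonempty) → (∀ i j, i < j → G i ⊂ G j) →
        ∀ f : ℕ → ℕ → ℕ, (∀ i, f i ∈ G i) →
        ∀ β : Fin m → Finset ℕ,
          (∀ l, (β l).Nonempty) →
          (∀ l l' : Fin m, l < l' → ∀ x ∈ β l, ∀ y ∈ β l', x < y) →
          (fun l => ∑ i ∈ β l, (α l (G i) + ∑ t ∈ H l (G i), f i t)) ∈ A))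
    ↔
    (∃ p : Fin m → Ultrafilter ℕ,
      (∀ i, IdempotentUF (p i)) ∧ (∀ i, MemJ (p i)) ∧ A ∈ tensor m p) := by
  classical
  constructor
  · rintro ⟨α, H, hne, -, hA⟩
    choose p hp1 hp2 hp3 using fun j => exists_p (α j) (H j) (hne j)
    refine ⟨p, hp1, hp2, mem_tensor_of m α H p hp3 A ∅ ?_⟩
    intro G hG hG2 f hf β hβ hβ2
    exact hA G (fun i => ⟨f i, hf i⟩) hG2 f hf β hβ hβ2
  · rintro ⟨p, hI, hJ, hA⟩
    let P : ℕ → Ultrafilter ℕ := fun i => if h : i < m then p ⟨i, h⟩ else pure 0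
    have hP : ∀ i (h : i < m), P i = p ⟨i, h⟩ := fun i h => dif_pos h
    have hPI : ∀ j < m, IdempotentUF (P j) := fun j hj => by rw [hP j hj]; exact hI _
    have hPJ : ∀ j < m, MemJ (P j) := fun j hj => by rw [hP j hj]; exact hJ _
    let A' : Set (ℕ → ℕ) := {u | (fun i : Fin m => u i) ∈ A}
    have hW : W P A' m 0 0 := by
      refine W_of_tensor P A' m p A hA 0 0 (fun i => ?_) (fun u _ hu => ?_)
      · rw [zero_add]; exact hP i i.2
      · change (fun i : Fin m => u i) ∈ A
        simpa only [zero_add] using hu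
    have hg0 : Good P A' m (0, 0) :=
      ⟨fun _ _ => rfl, hW, fun k hk => absurd hk (Nat.succ_ne_zero k).symm⟩
    have h2 := con_spec2 hPI hPJ hg0
    have h1 := fun F hF => con_spec1 hPI hPJ F hF (h2 F).1 (h2 F).2
    refine ⟨fun j F => ((con m P A' F).1 j).1, fun j F => ((con m P A' F).1 j).2,
      fun j F hF => (h1 F hF j).1, ?_, ?_⟩
    · intro j F G hF hFG
      exact (h1 G (hF.mono hFG.1) j).2.1 F hFG
    · intro G hGne hG f hf β hβ hβ2
      have hmono : ∀ n n', n ≤ n' → (con m P A' (G n)).2 ⊆ (con m P A' (G n')).2 := by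
        intro n n' hnn
        rcases hnn.eq_or_lt with rfl | hlt
        · exact subset_rfl
        · rw [con_snd, con_snd]
          rintro s (rfl | ⟨K, hK, r⟩)
          · exact Or.inl rfl
          · exact Or.inr ⟨K, hK.trans (hG n n' hlt), r⟩
      obtain ⟨v, hv1, -, hv3⟩ := path (m := m) (fun n => (con m P A' (G n)).2)
        (fun j n => ((con m P A' (G n)).1 j).1 + ∑ t ∈ ((con m P A' (G n)).1 j).2, f n t)
        (fun n => by rw [con_snd]; exact Or.inl rfl) hmono
        (fun n s hs j ha => by
          rw [con_snd]
          exact Or.inr ⟨G n, hG n (n + 1) (Nat.lt_succ_self n), hGne n, s, hs, j, f n, hf n, ha,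
            rfl⟩)
        β hβ hβ2 m le_rfl
      let N := (Finset.univ.biUnion β).sup id + 1
      have hR := hv3 N fun i _ x hx => Nat.lt_succ_of_le (Finset.le_sup (f := id)
        (Finset.mem_biUnion.2 ⟨i, Finset.mem_univ i, hx⟩))
      have hgood := ((h2 (G N)).2 _ hR).2.1
      simp only [Nat.sub_self] at hgood
      have hvA : (fun i : Fin m => v i) ∈ A := hgood
      convert hvA using 1
      funext l
      exact (hv1 l l.2).symm

end MultiCST
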